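/- For all real numbers q and V with 0 ≤ q < 1 and V > 0, there do not exist nonnegative real numbers m, m⊥, a, a⊥, b, b⊥, c, c⊥ satisfying m·m⊥ = 0, a·a⊥ = 0, b·b⊥ = 0, c·c⊥ = 0, together with the six equalities ((1−q)/2)·m⊥ + ((1+q)/2)·m = V; ((1−q)/2)·(a + a⊥) + q·m = V; ((1−q)/2)·(b + b⊥) + q·m = V; ((1−q)/2)·(c + c⊥) + q·m = V; ((1−q)/3)·(a + b + c) + q·m = V; and ((1−q)/3)·(a⊥ + b⊥ + c⊥) + q·m = V. -/

import Mathlib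

/-!
The three two-term decompositions give `a + a' = b + b' = c + c' = S`, and the trine decomposition
gives `2 * (a + b + c) = 3 * S`. Orthogonality makes each of `a, b, c` equal to `0` or `S`, so the
left side is an even multiple of `S`; hence `S = 0` and `V = q * m`. Then `m ≠ 0`, so `m' = 0`, and
the spectral decomposition gives `(1 + q) / 2 * m = q * m`, which is impossible for `q < 1`.
-/

/-- **Core of the proof that every mixed qubit state is Spekkens preparation contextual
(Banik et al.).** For `0 ≤ q < 1` and `V > 0` there are no nonnegative reals
`m, m⊥, a, a⊥, b, b⊥, c, c⊥` with vanishing products `m·m⊥ = a·a⊥ = b·b⊥ = c·c⊥ = 0`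
satisfying the six decomposition equalities. -/
theorem no_preparation_noncontextual_assignment (q V : ℝ)
    (hq0 : 0 ≤ q) (hq1 : q < 1) (hV : 0 < V) :
    ¬ ∃ m m' a a' b b' c c' : ℝ,
        0 ≤ m ∧ 0 ≤ m' ∧ 0 ≤ a ∧ 0 ≤ a' ∧ 0 ≤ b ∧ 0 ≤ b' ∧ 0 ≤ c ∧ 0 ≤ c' ∧
        m * m' = 0 ∧ a * a' = 0 ∧ b * b' = 0 ∧ c * c' = 0 ∧
        ((1 - q) / 2) * m' + ((1 + q) / 2) * m = V ∧
        ((1 - q) / 2) * (a + a') + q * m = V ∧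
        ((1 - q) / 2) * (b + b') + q * m = V ∧
        ((1 - q) / 2) * (c + c') + q * m = V ∧
        ((1 - q) / 3) * (a + b + c) + q * m = V ∧
        ((1 - q) / 3) * (a' + b' + c') + q * m = V := by
  rintro ⟨m, m', a, a', b, b', c, c', -, -, -, -, -, -, -, -,
    hm, ha, hb, hc, h1, h2, h3, h4, h5, -⟩
  have hr : 1 - q ≠ 0 := by linarith
  have hab : b + b' = a + a' := mul_left_cancel₀ hr (by linarith)
  have hac : c + c' = a + a' := mul_left_cancel₀ hr (by linarith)
  have hsum : 2 * (a + b + c) = 3 * (a + a') := mul_left_cancel₀ hr (by linarith)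
  -- Each of `a, b, c` is `0` or `S = a + a'`, so `2 * k * S = 3 * S` for an integer `k`.
  have hS : a + a' = 0 := by
    rcases mul_eq_zero.mp ha with h | h <;> rcases mul_eq_zero.mp hb with h' | h' <;>
      rcases mul_eq_zero.mp hc with h'' | h'' <;> linarith
  rw [hS, mul_zero, zero_add] at h2
  rcases mul_eq_zero.mp hm with h | h
  · rw [h, mul_zero] at h2
    linarith
  -- With `m' = 0`, both `(1 + q) / 2 * m` and `q * m` equal `V`.
  · have hm0 : m = 0 := by
      rw [h] at h1
      refine mul_left_cancel₀ hr ?_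
      linarith
    rw [hm0, mul_zero] at h2
    linarith
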